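/- Let X_δ = {t ∈ ℒ : ||t||_∞ ≥ δ} for δ > 0. Then there exists a constant Γ = Γ(ω,ν,r,R) > 0, depending only on ω, ν, r, R, such that ∫_{X_δ} e^{−q(t)} dt ≤ νk·exp(−δ²k^{ν−1}/Γ)·∫_ℒ e^{−q(t)} dt, where dt denotes Lebesgue measure on ℒ. -/

import Mathlib

open MeasureTheory Real InnerProductSpace

noncomputable section

variable {ν : ℕ}

/-- The coordinate index set of `ℝ^d`, `d = k_1 + ⋯ + k_ν`. -/
abbrev Idx (kk : Fin ν → ℕ) : Type := Σ j : Fin ν, Fin (kk j)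

/-- The multi-index set, of cardinality `n = k_1 ⋯ k_ν`. -/
abbrev MIdx (kk : Fin ν → ℕ) : Type := ∀ j : Fin ν, Fin (kk j)

/-- The ambient Euclidean space `ℝ^d`. -/
abbrev Spc (kk : Fin ν → ℕ) : Type := EuclideanSpace ℝ (Idx kk)

/-- The coordinate functional `t ↦ τ_{j,i}`. -/
def coordL (kk : Fin ν → ℕ) (p : Idx kk) : Spc kk →ₗ[ℝ] ℝ where
  toFun t := t p
  map_add' _ _ := rfl
  map_smul' _ _ := rfl

/-- The linear functional `t ↦ ⟨a_m, t⟩ = τ_{1,m_1} + ⋯ + τ_{ν,m_ν}`. -/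
def linF (kk : Fin ν → ℕ) (m : MIdx kk) : Spc kk →ₗ[ℝ] ℝ :=
  ∑ j : Fin ν, coordL kk ⟨j, m j⟩

/-- The column `a_m` of the constraint matrix `A`. -/
def colA (kk : Fin ν → ℕ) (m : MIdx kk) : Spc kk :=
  (WithLp.equiv 2 (Idx kk → ℝ)).symm (fun p => if p.2 = m p.1 then 1 else 0)

/-- The quadratic form `q(t) = (1/2) ∑_m α_m (τ_{1,m_1} + ⋯ + τ_{ν,m_ν})²`. -/
def qform (kk : Fin ν → ℕ) (α : MIdx kk → ℝ) (t : Spc kk) : ℝ :=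
  (1/2) * ∑ m : MIdx kk, α m * (linF kk m t)^2

/-- The symmetric positive semidefinite matrix `B` with `q(t) = (1/2)⟨t, Bt⟩`,
given explicitly as `B = ∑_m α_m a_m a_mᵀ`. -/
def Bmat (kk : Fin ν → ℕ) (α : MIdx kk → ℝ) : Spc kk →ₗ[ℝ] Spc kk :=
  ∑ m : MIdx kk, α m • (linF kk m).smulRight (colA kk m)

/-- The sup norm `‖t‖_∞`. -/
def supNorm (kk : Fin ν → ℕ) (t : Spc kk) : ℝ := ‖(WithLp.equiv 2 (Idx kk → ℝ)) t‖

/-- The subspace `ℒ = {t : τ_{j,k_j} = 0 for j = 2,…,ν}`. -/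
def Lsub (kk : Fin ν → ℕ) (hk : ∀ j, 0 < kk j) : Submodule ℝ (Spc kk) :=
  ⨅ (j : {j : Fin ν // (j : ℕ) ≠ 0}),
    LinearMap.ker (coordL kk ⟨j.1, ⟨kk j.1 - 1, Nat.sub_lt (hk j.1) one_pos⟩⟩)

/- Let `S = ∑_m ⟨a_m, t⟩²`. Summing over the lines of the multi-index grid in direction `j` shows
that each difference `τ_{j,i} - τ_{j,i'}` satisfies `w ^ (ν - 1) (τ_{j,i} - τ_{j,i'})² ≤ 4 S` when
all `k_j ≥ w`. On `ℒ` one can take `τ_{j,i'} = 0` for `j ≥ 2`, and the coordinates with `j = 1` are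
then controlled through a single well-chosen sum `⟨a_m, t⟩`. Hence `q(t) ≥ a τ_p²` for every
coordinate `p`, with `a` a constant multiple of `k ^ (ν - 1)`.

For a positive definite form `Q ≥ a l²`, represent `l` by a vector and shift by the multiple `v` of
it with `l v = δ`. This maps `{l ≥ 0}` onto `{l ≥ δ}` and increases `Q` by at least `Q v ≥ a δ²`, so
that `{|l| ≥ δ}` carries at most a proportion `exp (-a δ²)` of the mass of `exp (-Q)`; a union bound
over the at most `ν k` coordinates concludes. -/

section PositiveDefinite

open QuadraticMap

lemma exists_polar_eq_of_anisotropic {K V : Type*} [Field K] [NeZero (2 : K)] [AddCommGroup V]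
    [Module K V] [FiniteDimensional K V] {Q : QuadraticForm K V} (hQ : Q.Anisotropic)
    (l : V →ₗ[K] K) : ∃ u, ∀ t, polar Q u t = l t := by
  have hinj : Function.Injective Q.polarBilin := by
    refine LinearMap.ker_eq_bot.1 (LinearMap.ker_eq_bot'.2 fun u hu => hQ u ?_)
    simpa [two_ne_zero] using LinearMap.congr_fun hu u
  obtain ⟨u, hu⟩ := (LinearMap.injective_iff_surjective_of_finrank_eq_finrank
    Subspace.dual_finrank_eq.symm).1 hinj l
  exact ⟨u, LinearMap.congr_fun hu⟩

lemma exists_map_add_eq_of_posDef {K V : Type*} [Field K] [LinearOrder K] [IsStrictOrderedRing K]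
    [AddCommGroup V] [Module K V] [FiniteDimensional K V] {Q : QuadraticForm K V}
    (hQ : Q.PosDef) {l : V →ₗ[K] K} (hl : l ≠ 0) {δ : K} (hδ : 0 ≤ δ) :
    ∃ v, l v = δ ∧ ∃ c, 0 ≤ c ∧ ∀ t, Q (t + v) = Q t + Q v + c * l t := by
  obtain ⟨u, hu⟩ := exists_polar_eq_of_anisotropic hQ.anisotropic l
  have hu0 : u ≠ 0 := by
    rintro rfl
    exact hl (LinearMap.ext fun t => by simp [← hu])
  have hlu : 0 < l u := by
    rw [← hu, polar_self, two_nsmul]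
    exact add_pos (hQ u hu0) (hQ u hu0)
  refine ⟨(δ / l u) • u, by simp [hlu.ne'], δ / l u, by positivity, fun t => ?_⟩
  rw [QuadraticMap.map_add Q, polar_comm, polar_smul_left, hu, smul_eq_mul]

lemma continuous_quadraticForm {E : Type*} [NormedAddCommGroup E] [NormedSpace ℝ E]
    [FiniteDimensional ℝ E] (Q : QuadraticForm ℝ E) : Continuous Q := by
  have h : Continuous fun t => (associated (R := ℝ) Q).toContinuousBilinearMap t t := by fun_prop
  exact h.congr (associated_eq_self_apply ℝ Q)

lemma exists_mul_norm_sq_le_of_posDef {E : Type*} [NormedAddCommGroup E] [NormedSpace ℝ E]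
    [FiniteDimensional ℝ E] {Q : QuadraticForm ℝ E} (hQ : Q.PosDef) :
    ∃ b > 0, ∀ t, b * ‖t‖ ^ 2 ≤ Q t := by
  cases subsingleton_or_nontrivial E
  · exact ⟨1, one_pos, fun t => by simp [Subsingleton.elim t 0]⟩
  obtain ⟨u, hu, hmin⟩ := (isCompact_sphere (0 : E) 1).exists_isMinOn
    (NormedSpace.sphere_nonempty.2 zero_le_one) (continuous_quadraticForm Q).continuousOn
  refine ⟨Q u, hQ u (ne_zero_of_mem_unit_sphere ⟨u, hu⟩), fun t => ?_⟩
  rcases eq_or_ne t 0 with rfl | ht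
  · simp
  have hle : Q u ≤ Q (‖t‖⁻¹ • t) := hmin (by simp [norm_smul, ht])
  rwa [QuadraticMap.map_smul, smul_eq_mul, ← mul_inv, ← pow_two, ← div_eq_inv_mul,
    le_div_iff₀ (by positivity)] at hle

lemma integrable_exp_neg_of_posDef {E : Type*} [NormedAddCommGroup E] [InnerProductSpace ℝ E]
    [FiniteDimensional ℝ E] [MeasurableSpace E] [BorelSpace E] {Q : QuadraticForm ℝ E}
    (hQ : Q.PosDef) : Integrable fun t => exp (-Q t) := by
  have hcont := continuous_quadraticForm Q
  obtain ⟨b, hb, hbQ⟩ := exists_mul_norm_sq_le_of_posDef hQ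
  have hgauss : Integrable fun t : E => exp (-b * ‖t‖ ^ 2) := by
    have h := (GaussianFourier.integrable_cexp_neg_mul_sq_norm_add (V := E) (b := b)
      (by simpa using hb) 0 0).norm
    refine h.congr (.of_forall fun t => ?_)
    simp only [zero_mul, add_zero, Complex.norm_exp]
    norm_cast
  refine hgauss.mono' (by fun_prop) (.of_forall fun t => ?_)
  rw [norm_of_nonneg (exp_pos _).le, exp_le_exp]
  linarith [hbQ t]

end PositiveDefinite

section GaussianTails

variable {E : Type*} [NormedAddCommGroup E] [NormedSpace ℝ E] [FiniteDimensional ℝ E]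
  [MeasurableSpace E] [BorelSpace E] (μ : Measure E) [μ.IsAddHaarMeasure]

lemma setLIntegral_nonneg_add_setLIntegral_nonpos {l : E →ₗ[ℝ] ℝ} (hl : l ≠ 0)
    (f : E → ENNReal) :
    ∫⁻ t in {t | 0 ≤ l t}, f t ∂μ + ∫⁻ t in {t | l t ≤ 0}, f t ∂μ = ∫⁻ t, f t ∂μ := by
  have hmeas : MeasurableSet {t | 0 ≤ l t} :=
    measurableSet_le measurable_const l.continuous_of_finiteDimensional.measurable
  have hker : μ {t | l t = 0} = 0 :=
    Measure.addHaar_submodule μ (LinearMap.ker l) (mt LinearMap.ker_eq_top.1 hl)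
  have hae : {t | l t ≤ 0} =ᵐ[μ] {t | 0 ≤ l t}ᶜ := by
    filter_upwards [measure_eq_zero_iff_ae_notMem.1 hker] with t ht
    exact propext ⟨fun h => not_le.2 (lt_of_le_of_ne h ht), fun h => (not_le.1 h).le⟩
  rw [setLIntegral_congr hae]
  exact lintegral_add_compl f hmeas

variable {Q : QuadraticForm ℝ E} {l : E →ₗ[ℝ] ℝ} {a δ : ℝ}

lemma setLIntegral_exp_neg_posDef_le (hQ : Q.PosDef) (hl : l ≠ 0) (hδ : 0 ≤ δ)
    (hlQ : ∀ t, a * l t ^ 2 ≤ Q t) :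
    ∫⁻ t in {t | δ ≤ l t}, ENNReal.ofReal (exp (-Q t)) ∂μ ≤
      ENNReal.ofReal (exp (-(a * δ ^ 2))) *
        ∫⁻ t in {t | 0 ≤ l t}, ENNReal.ofReal (exp (-Q t)) ∂μ := by
  obtain ⟨v, hv, c, hc, hQv⟩ := exists_map_add_eq_of_posDef hQ hl hδ
  have hpre : (· + v) ⁻¹' {t | δ ≤ l t} = {t | 0 ≤ l t} := by
    ext t
    simp [hv]
  have hmeas : MeasurableSet {t | 0 ≤ l t} :=
    measurableSet_le measurable_const l.continuous_of_finiteDimensional.measurable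
  rw [← (measurePreserving_add_right μ v).setLIntegral_comp_preimage_emb
    (measurableEmbedding_addRight v), hpre, ← lintegral_const_mul' _ _ ENNReal.ofReal_ne_top]
  refine setLIntegral_mono' hmeas fun t ht => ?_
  rw [← ENNReal.ofReal_mul (exp_pos _).le, ← exp_add, hQv]
  have hQδ : a * δ ^ 2 ≤ Q v := hv ▸ hlQ v
  have hct : 0 ≤ c * l t := mul_nonneg hc ht
  gcongr
  linarith

lemma setLIntegral_abs_exp_neg_posDef_le (hQ : Q.PosDef) (hδ : 0 < δ)
    (hlQ : ∀ t, a * l t ^ 2 ≤ Q t) :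
    ∫⁻ t in {t | δ ≤ |l t|}, ENNReal.ofReal (exp (-Q t)) ∂μ ≤
      ENNReal.ofReal (exp (-(a * δ ^ 2))) * ∫⁻ t, ENNReal.ofReal (exp (-Q t)) ∂μ := by
  rcases eq_or_ne l 0 with rfl | hl
  · simp [hδ.not_ge]
  have hunion : {t | δ ≤ |l t|} = {t | δ ≤ l t} ∪ {t | δ ≤ (-l) t} := by
    ext t
    simp [le_abs]
  have hpos := setLIntegral_exp_neg_posDef_le μ hQ hl hδ.le hlQ
  have hneg := setLIntegral_exp_neg_posDef_le μ hQ (neg_ne_zero.2 hl) hδ.le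
    (by simpa using hlQ)
  rw [hunion]
  refine (lintegral_union_le _ _ _).trans ((add_le_add hpos hneg).trans_eq ?_)
  rw [← mul_add, ← setLIntegral_nonneg_add_setLIntegral_nonpos μ hl]
  simp only [LinearMap.neg_apply, Left.nonneg_neg_iff]

end GaussianTails

theorem setIntegral_exists_abs_exp_neg_posDef_le {E : Type*} [NormedAddCommGroup E]
    [InnerProductSpace ℝ E] [FiniteDimensional ℝ E] [MeasurableSpace E] [BorelSpace E]
    {Q : QuadraticForm ℝ E} (hQ : Q.PosDef) {ι : Type*} [Fintype ι] {l : ι → E →ₗ[ℝ] ℝ}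
    {a δ : ℝ} (hδ : 0 < δ) (hlQ : ∀ i t, a * l i t ^ 2 ≤ Q t) :
    ∫ t in {t | ∃ i, δ ≤ |l i t|}, exp (-Q t) ≤
      Fintype.card ι * exp (-(a * δ ^ 2)) * ∫ t, exp (-Q t) := by
  have hint := integrable_exp_neg_of_posDef hQ
  have hnonneg : ∀ t, 0 ≤ exp (-Q t) := fun t => (exp_pos _).le
  have htail : ∫⁻ t in {t | ∃ i, δ ≤ |l i t|}, ENNReal.ofReal (exp (-Q t)) ≤
      Fintype.card ι * ENNReal.ofReal (exp (-(a * δ ^ 2))) *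
        ∫⁻ t, ENNReal.ofReal (exp (-Q t)) := by
    calc _ ≤ ∑ i, ∫⁻ t in {t | δ ≤ |l i t|}, ENNReal.ofReal (exp (-Q t)) := by
          rw [Set.ofPred_exists, ← tsum_fintype (L := .unconditional ι)]
          exact lintegral_iUnion_le _ _
      _ ≤ ∑ _i : ι, ENNReal.ofReal (exp (-(a * δ ^ 2))) *
            ∫⁻ t, ENNReal.ofReal (exp (-Q t)) :=
          Finset.sum_le_sum fun i _ => setLIntegral_abs_exp_neg_posDef_le volume hQ hδ (hlQ i)
      _ = _ := by simp [mul_assoc]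
  have : 0 ≤ ∫ t, exp (-Q t) := integral_nonneg hnonneg
  rw [← ENNReal.ofReal_le_ofReal_iff (by positivity), ENNReal.ofReal_mul (by positivity),
    ENNReal.ofReal_mul (by positivity), ENNReal.ofReal_natCast,
    ofReal_integral_eq_lintegral_ofReal hint.integrableOn (.of_forall hnonneg),
    ofReal_integral_eq_lintegral_ofReal hint (.of_forall hnonneg)]
  exact htail

section GridEnergy

variable {ι : Type*} [Fintype ι] [DecidableEq ι] {κ : ι → Type*} (x : ∀ j, κ j → ℝ)

/-- The sum over the coordinates other than `j`, as a function on the grid `∏ l ≠ j, κ l` that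
indexes the lines in direction `j`. -/
def offSum (j : ι) (m : ∀ l : {l // l ≠ j}, κ l) : ℝ := ∑ l : {l // l ≠ j}, x l (m l)

variable {x} in
lemma mul_offSum_sq_le {j : ι} {C b : ℝ} (hC : 0 ≤ C) (hb : 0 ≤ b)
    (h : ∀ l ≠ j, ∀ i, C * x l i ^ 2 ≤ b) (m : ∀ l : {l // l ≠ j}, κ l) :
    C * offSum x j m ^ 2 ≤ Fintype.card ι ^ 2 * b := by
  have hcard : (Fintype.card {l // l ≠ j} : ℝ) ≤ Fintype.card ι := by
    exact_mod_cast Fintype.card_subtype_le _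
  calc C * offSum x j m ^ 2
      ≤ C * (Fintype.card {l // l ≠ j} * ∑ l : {l // l ≠ j}, x l (m l) ^ 2) :=
        mul_le_mul_of_nonneg_left sq_sum_le_card_mul_sum_sq hC
    _ = Fintype.card {l // l ≠ j} * ∑ l : {l // l ≠ j}, C * x l (m l) ^ 2 := by
        rw [mul_left_comm, Finset.mul_sum]
    _ ≤ Fintype.card {l // l ≠ j} * ∑ _l : {l // l ≠ j}, b :=
        mul_le_mul_of_nonneg_left (Finset.sum_le_sum fun l _ => h l l.2 (m l)) (by positivity)
    _ = (Fintype.card {l // l ≠ j} : ℝ) ^ 2 * b := by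
        rw [Finset.sum_const, Finset.card_univ, nsmul_eq_mul, ← mul_assoc, pow_two]
    _ ≤ Fintype.card ι ^ 2 * b := by gcongr

variable [∀ j, Fintype (κ j)]

/-- The sum of the squares `(∑ j, x_{j, m_j})²` over the whole multi-index grid `∏ j, κ j`; it is
`2 q` when all weights `α_m` are `1`. -/
def gridEnergy : ℝ := ∑ m : ∀ j, κ j, (∑ j, x j (m j)) ^ 2

lemma gridEnergy_eq_sum_sum (j : ι) :
    gridEnergy x = ∑ i, ∑ m, (x j i + offSum x j m) ^ 2 := by
  rw [← Fintype.sum_prod_type', ← (Equiv.piSplitAt j κ).sum_comp, gridEnergy]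
  exact Finset.sum_congr rfl fun m _ =>
    congrArg (· ^ 2) (Fintype.sum_eq_add_sum_subtype_ne (fun l => x l (m l)) j)

lemma sum_sq_add_offSum_le_gridEnergy (j : ι) (i : κ j) :
    ∑ m, (x j i + offSum x j m) ^ 2 ≤ gridEnergy x := by
  rw [gridEnergy_eq_sum_sum x j]
  exact Finset.single_le_sum (f := fun i => ∑ m, (x j i + offSum x j m) ^ 2)
    (fun _ _ => by positivity) (Finset.mem_univ i)

lemma card_mul_sq_sub_le_gridEnergy (j : ι) (i i' : κ j) :
    Fintype.card (∀ l : {l // l ≠ j}, κ l) * (x j i - x j i') ^ 2 ≤ 4 * gridEnergy x := by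
  calc Fintype.card (∀ l : {l // l ≠ j}, κ l) * (x j i - x j i') ^ 2
      = ∑ _m : ∀ l : {l // l ≠ j}, κ l, (x j i - x j i') ^ 2 := by simp
    _ ≤ ∑ m, (2 * (x j i + offSum x j m) ^ 2 + 2 * (x j i' + offSum x j m) ^ 2) :=
        Finset.sum_le_sum fun m _ => by
          linarith [sq_nonneg (x j i + x j i' + 2 * offSum x j m)]
    _ ≤ 4 * gridEnergy x := by
        rw [Finset.sum_add_distrib, ← Finset.mul_sum, ← Finset.mul_sum]
        linarith [sum_sq_add_offSum_le_gridEnergy x j i, sum_sq_add_offSum_le_gridEnergy x j i']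

lemma exists_card_mul_sq_add_offSum_le_gridEnergy [∀ j, Nonempty (κ j)] (j : ι) (i : κ j) :
    ∃ m, Fintype.card (∀ l : {l // l ≠ j}, κ l) * (x j i + offSum x j m) ^ 2 ≤
      gridEnergy x := by
  obtain ⟨m, -, hm⟩ := Finset.univ.exists_min_image
    (fun m => (x j i + offSum x j m) ^ 2) Finset.univ_nonempty
  refine ⟨m, le_trans ?_ (sum_sq_add_offSum_le_gridEnergy x j i)⟩
  simpa using Finset.card_nsmul_le_sum _ _ _ hm

variable {x} in
lemma mul_sq_le_gridEnergy {C : ℝ} (hC0 : 0 ≤ C)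
    (hC : ∀ j : ι, C ≤ Fintype.card (∀ l : {l // l ≠ j}, κ l)) {j₀ : ι} {e : ∀ j, κ j}
    (he : ∀ j ≠ j₀, x j (e j) = 0) (j : ι) (i : κ j) :
    C * x j i ^ 2 ≤ (2 + 8 * Fintype.card ι ^ 2) * gridEnergy x := by
  have : ∀ j, Nonempty (κ j) := fun j => ⟨e j⟩
  have hS : 0 ≤ gridEnergy x := Finset.sum_nonneg fun _ _ => sq_nonneg _
  have hcoord : ∀ j ≠ j₀, ∀ i, C * x j i ^ 2 ≤ 4 * gridEnergy x := fun j hj i => by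
    refine (mul_le_mul_of_nonneg_right (hC j) (sq_nonneg _)).trans ?_
    simpa [he j hj] using card_mul_sq_sub_le_gridEnergy x j i (e j)
  rcases eq_or_ne j j₀ with rfl | hj
  · obtain ⟨m, hm⟩ := exists_card_mul_sq_add_offSum_le_gridEnergy x j i
    have hsum := (mul_le_mul_of_nonneg_right (hC j) (sq_nonneg _)).trans hm
    have hoff := mul_offSum_sq_le hC0 (by linarith) hcoord m
    have hsq : x j i ^ 2 ≤ 2 * (x j i + offSum x j m) ^ 2 + 2 * offSum x j m ^ 2 := by
      linarith [sq_nonneg (x j i + 2 * offSum x j m)]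
    linarith [mul_le_mul_of_nonneg_left hsq hC0]
  · have hcard : (1 : ℝ) ≤ Fintype.card ι := by
      exact_mod_cast Fintype.card_pos_iff.2 ⟨j⟩
    exact (hcoord j hj i).trans (mul_le_mul_of_nonneg_right (by nlinarith) hS)

end GridEnergy

section RestrictedForm

variable {kk : Fin ν → ℕ} {α : MIdx kk → ℝ} {r w δ : ℝ}

lemma linF_apply (m : MIdx kk) (t : Spc kk) : linF kk m t = ∑ j, t ⟨j, m j⟩ :=
  LinearMap.sum_apply _ _ _

lemma coord_eq_zero_of_mem_Lsub {hk : ∀ j, 0 < kk j} {t : Spc kk} (ht : t ∈ Lsub kk hk)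
    {j : Fin ν} (hj : (j : ℕ) ≠ 0) : t ⟨j, ⟨kk j - 1, Nat.sub_lt (hk j) one_pos⟩⟩ = 0 :=
  (Submodule.mem_iInf _).1 ht ⟨j, hj⟩

lemma le_supNorm_iff (hδ : 0 < δ) (t : Spc kk) : δ ≤ supNorm kk t ↔ ∃ p, δ ≤ |t p| := by
  rw [supNorm, ← not_lt, pi_norm_lt_iff hδ]
  simp

lemma card_Idx_le {k : ℝ} (hk : ∀ j, (kk j : ℝ) ≤ k) : (Fintype.card (Idx kk) : ℝ) ≤ ν * k := by
  simpa [Fintype.card_sigma] using Finset.sum_le_sum fun j (_ : j ∈ Finset.univ) => hk j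

lemma pow_le_card_pi_ne (hw : 0 ≤ w) (hwk : ∀ j, w ≤ kk j) (j : Fin ν) :
    w ^ (ν - 1) ≤ Fintype.card (∀ l : {l // l ≠ j}, Fin (kk l)) := by
  calc w ^ (ν - 1) = ∏ _l : {l // l ≠ j}, w := by simp [Fintype.card_subtype_compl]
    _ ≤ ∏ l : {l // l ≠ j}, (kk l : ℝ) := Finset.prod_le_prod (fun _ _ => hw) fun l _ => hwk l
    _ = _ := by simp [Fintype.card_pi]

lemma mul_gridEnergy_le_two_mul_qform (hα : ∀ m, r ≤ α m) (t : Spc kk) :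
    r * gridEnergy (fun j i => t ⟨j, i⟩) ≤ 2 * qform kk α t := by
  rw [qform, ← mul_assoc, mul_one_div_cancel two_ne_zero, one_mul, gridEnergy, Finset.mul_sum]
  simp only [linF_apply]
  exact Finset.sum_le_sum fun m _ => mul_le_mul_of_nonneg_right (hα m) (sq_nonneg _)

lemma mul_sq_coord_le_qform {hk : ∀ j, 0 < kk j} (hr : 0 ≤ r) (hα : ∀ m, r ≤ α m) (hw : 0 ≤ w)
    (hwk : ∀ j, w ≤ kk j) {t : Spc kk} (ht : t ∈ Lsub kk hk) (p : Idx kk) :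
    r / (2 * (2 + 8 * ν ^ 2)) * w ^ (ν - 1) * t p ^ 2 ≤ qform kk α t := by
  have hgrid : w ^ (ν - 1) * t p ^ 2 ≤
      (2 + 8 * ν ^ 2) * gridEnergy (fun j i => t ⟨j, i⟩) := by
    have h := mul_sq_le_gridEnergy (x := fun j i => t ⟨j, i⟩) (pow_nonneg hw _)
      (pow_le_card_pi_ne hw hwk) (j₀ := ⟨0, p.1.pos⟩)
      (e := fun j => ⟨kk j - 1, Nat.sub_lt (hk j) one_pos⟩)
      (fun j hj => coord_eq_zero_of_mem_Lsub ht fun h => hj (Fin.ext h)) p.1 p.2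
    rwa [Fintype.card_fin] at h
  calc r / (2 * (2 + 8 * ν ^ 2)) * w ^ (ν - 1) * t p ^ 2
      = r / (2 * (2 + 8 * ν ^ 2)) * (w ^ (ν - 1) * t p ^ 2) := mul_assoc _ _ _
    _ ≤ r / (2 * (2 + 8 * ν ^ 2)) *
          ((2 + 8 * ν ^ 2) * gridEnergy (fun j i => t ⟨j, i⟩)) := by gcongr
    _ = r * gridEnergy (fun j i => t ⟨j, i⟩) / 2 := by field_simp
    _ ≤ qform kk α t := by linarith [mul_gridEnergy_le_two_mul_qform hα t]

variable (kk α) in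
/-- `qform` as a bundled quadratic form, which makes positive definiteness and restriction to `ℒ`
available. -/
def qformQ : QuadraticForm ℝ (Spc kk) :=
  (1 / 2 : ℝ) • ∑ m, α m • QuadraticMap.sq.comp (linF kk m)

lemma qformQ_apply (t : Spc kk) : qformQ kk α t = qform kk α t := by
  simp [qformQ, qform, pow_two]

lemma posDef_restrict_qformQ (hk : ∀ j, 0 < kk j) (hr : 0 < r) (hα : ∀ m, r ≤ α m) :
    ((qformQ kk α).restrict (Lsub kk hk)).PosDef := by
  intro t ht
  obtain ⟨p, hp⟩ : ∃ p, (t : Spc kk) p ≠ 0 := by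
    by_contra! h
    exact ht (Subtype.ext (PiLp.ext h))
  refine lt_of_lt_of_le ?_ ((mul_sq_coord_le_qform hr.le hα zero_le_one
    (fun j => by exact_mod_cast hk j) t.2 p).trans_eq (qformQ_apply _).symm)
  positivity

theorem setIntegral_supNorm_exp_neg_qform_le (hk : ∀ j, 0 < kk j) (hr : 0 < r)
    (hα : ∀ m, r ≤ α m) (hw : 0 ≤ w) (hwk : ∀ j, w ≤ kk j) (hδ : 0 < δ) :
    ∫ t in {t : Lsub kk hk | δ ≤ supNorm kk t}, exp (-qform kk α t) ≤
      Fintype.card (Idx kk) * exp (-(r / (2 * (2 + 8 * ν ^ 2)) * w ^ (ν - 1) * δ ^ 2)) *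
        ∫ t : Lsub kk hk, exp (-qform kk α t) := by
  have h := setIntegral_exists_abs_exp_neg_posDef_le (posDef_restrict_qformQ hk hr hα)
    (l := fun p => (coordL kk p).domRestrict (Lsub kk hk)) hδ fun p t =>
      (mul_sq_coord_le_qform hr.le hα hw hwk t.2 p).trans_eq (qformQ_apply _).symm
  simp only [QuadraticMap.restrict_apply, qformQ_apply] at h
  simp only [le_supNorm_iff hδ]
  exact h

end RestrictedForm

theorem statement5_general (ν : ℕ) (ω r : ℝ) (hω : 0 < ω) (hr : 0 < r) :
    ∃ Γ : ℝ, 0 < Γ ∧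
      ∀ (kk : Fin ν → ℕ) (hk : ∀ j, 0 < kk j) (k : ℝ),
        0 ≤ k → (∀ j, ω * k ≤ kk j) → (∀ j, (kk j : ℝ) ≤ k) →
        ∀ α : MIdx kk → ℝ, (∀ m, r ≤ α m) →
        ∀ δ : ℝ, 0 < δ →
          (∫ t in {t : ↥(Lsub kk hk) | δ ≤ supNorm kk (t : Spc kk)},
              exp (-(qform kk α (t : Spc kk))))
            ≤ (ν : ℝ) * k * exp (-(δ ^ 2 * k ^ (ν - 1) / Γ)) *
              ∫ t : ↥(Lsub kk hk), exp (-(qform kk α (t : Spc kk))) := by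
  refine ⟨2 * (2 + 8 * ν ^ 2) / (r * ω ^ (ν - 1)), by positivity,
    fun kk hk k hk0 hlow hup α hα δ hδ => ?_⟩
  have hrate : r / (2 * (2 + 8 * (ν : ℝ) ^ 2)) * (ω * k) ^ (ν - 1) * δ ^ 2 =
      δ ^ 2 * k ^ (ν - 1) / (2 * (2 + 8 * ν ^ 2) / (r * ω ^ (ν - 1))) := by
    rw [mul_pow]
    field_simp
  have htail := setIntegral_supNorm_exp_neg_qform_le hk hr hα (by positivity) hlow hδ
  rw [hrate] at htail
  refine htail.trans ?_
  gcongr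
  exact card_Idx_le hup

/-- For `X_δ = {t ∈ ℒ : ‖t‖_∞ ≥ δ}`, there exists a constant
`Γ = Γ(ω,ν,r,R) > 0` such that
`∫_{X_δ} e^{−q(t)} dt ≤ νk · exp(−δ²k^{ν−1}/Γ) · ∫_ℒ e^{−q(t)} dt`. -/
theorem statement5 (ν : ℕ) (hν : 2 ≤ ν) (ω r R : ℝ)
    (hω0 : 0 < ω) (hω1 : ω ≤ 1) (hr : 0 < r) (hrR : r ≤ R) :
    ∃ Γ : ℝ, 0 < Γ ∧
      ∀ (kk : Fin ν → ℕ) (hkk : ∀ j, 2 ≤ kk j) (hk : ∀ j, 0 < kk j) (k : ℝ),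
        1 ≤ ω * k → (∀ j, ω * k ≤ kk j) → (∀ j, (kk j : ℝ) ≤ k) →
        ∀ (α : MIdx kk → ℝ), (∀ m, r ≤ α m) → (∀ m, α m ≤ R) →
        ∀ δ : ℝ, 0 < δ →
          (∫ t in {t : ↥(Lsub kk hk) | δ ≤ supNorm kk (t : Spc kk)},
              Real.exp (-(qform kk α (t : Spc kk))))
            ≤ (ν : ℝ) * k * Real.exp (-(δ^2 * k ^ (ν - 1) / Γ)) *
              ∫ t : ↥(Lsub kk hk), Real.exp (-(qform kk α (t : Spc kk))) := by
  obtain ⟨Γ, hΓ, h⟩ := statement5_general ν ω r hω0 hr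
  exact ⟨Γ, hΓ, fun kk _ hk k hωk hlow hup α hα _ =>
    h kk hk k (pos_of_mul_pos_right (one_pos.trans_le hωk) hω0.le).le hlow hup α hα⟩
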